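/- Let I and J be operator ideals with {0} ⊊ I ⊊ J ⊊ B(H). Then there exists an uncountable family (C_α)_{α ∈ (0,1]} of Cartan subalgebras of J such that: (a) for all α, β ∈ (0,1] there exists W ∈ U_J(H) with W C_α W* = C_β (the C_α are pairwise U_J(H)-conjugate); (b) each C_α ∩ I is a Cartan subalgebra of I; and (c) whenever α ≠ β, there is no W ∈ U_I(H) with W (C_α ∩ I) W* = C_β ∩ I. -/

import Mathlib

/-!
A compact operator in `J` and outside `I` has a polar decomposition whose positive part `D` is
diagonal in some Hilbert basis `e` and again lies in `J` and outside `I`. Put `U t = exp (i t D)`,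
split the space by isometries `E` and `F` onto the spans of two halves of `e`, and let `W t` act as
`U t` along the isometry `g = (E - F) / √2`, that is, `W t = 1 + g (U t - 1) g*`. Since
`|exp (i x) - 1| ≤ |x|`, all `W t - 1` lie in `J`, so conjugating the operators of `J` that are
diagonal in `e` by the `W t` gives Cartan subalgebras that are conjugate in `U_J(H)`.

Were two of them conjugate in `U_I(H)` after intersection with `I`, some `W t` with `t ≠ 0` would be
congruent modulo `I` to an operator `V` normalizing the diagonal operators of `I`. Such a `V` sends
every basis vector to a multiple of a basis vector, so one of the compressions `E* V E` and `F* V E`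
vanishes at each basis vector. The corresponding compressions of `W t` are `(1 + U t) / 2` and
`(1 - U t) / 2`, hence their product `(1 - U (2 t)) / 4` lies in `I`. For small `t` it dominates a
multiple of `D` by Jordan's inequality, contradicting `D ∉ I`.
-/

open Set

/-- A (two-sided) operator ideal of `B(H)`. -/
def IsOperatorIdeal {H : Type*} [NormedAddCommGroup H] [InnerProductSpace ℂ H]
    (I : Set (H →L[ℂ] H)) : Prop :=
  (0 : H →L[ℂ] H) ∈ I ∧
  (∀ A B : H →L[ℂ] H, A ∈ I → B ∈ I → A + B ∈ I) ∧
  (∀ (c : ℂ) (A : H →L[ℂ] H), A ∈ I → c • A ∈ I) ∧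
  (∀ (T A : H →L[ℂ] H), A ∈ I → T * A ∈ I ∧ A * T ∈ I)

/-- `C` is a self-adjoint complex-linear subspace of `I` consisting of mutually
commuting operators. -/
def IsCommSelfAdjointSubspace {H : Type*} [NormedAddCommGroup H] [InnerProductSpace ℂ H]
    [CompleteSpace H] (I C : Set (H →L[ℂ] H)) : Prop :=
  C ⊆ I ∧
  (0 : H →L[ℂ] H) ∈ C ∧
  (∀ S T : H →L[ℂ] H, S ∈ C → T ∈ C → S + T ∈ C) ∧
  (∀ (c : ℂ) (T : H →L[ℂ] H), T ∈ C → c • T ∈ C) ∧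
  (∀ T ∈ C, star T ∈ C) ∧
  (∀ S T : H →L[ℂ] H, S ∈ C → T ∈ C → S * T = T * S)

/-- `C` is a Cartan subalgebra of the operator ideal `I`. -/
def IsCartanSubalgebra {H : Type*} [NormedAddCommGroup H] [InnerProductSpace ℂ H]
    [CompleteSpace H] (I C : Set (H →L[ℂ] H)) : Prop :=
  IsCommSelfAdjointSubspace I C ∧
  ∀ C' : Set (H →L[ℂ] H), IsCommSelfAdjointSubspace I C' → C ⊆ C' → C' = C

open InnerProductSpace (rankOne comp_rankOne rankOne_comp rankOne_comp_rankOne)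
open scoped InnerProductSpace ENNReal lp

section HilbertBasis

variable {ι 𝕜 E F : Type*} [RCLike 𝕜] [NormedAddCommGroup E] [InnerProductSpace 𝕜 E]

lemma hilbertBasis_ext_inner (e : HilbertBasis ι 𝕜 E) {x y : E}
    (h : ∀ i, ⟪e i, x⟫_𝕜 = ⟪e i, y⟫_𝕜) : x = y :=
  e.repr.injective <| lp.ext <| funext fun i => by simp only [e.repr_apply_apply, h i]

lemma hilbertBasis_ext_clm [NormedAddCommGroup F] [NormedSpace 𝕜 F] (e : HilbertBasis ι 𝕜 E)
    {A B : E →L[𝕜] F} (h : ∀ i, A (e i) = B (e i)) : A = B :=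
  ContinuousLinearMap.ext_on
    (Submodule.dense_iff_topologicalClosure_eq_top.mpr e.dense_span)
    (Set.forall_mem_range.mpr h)

end HilbertBasis

section PartialIsometry

variable {ι 𝕜 E F : Type*} [RCLike 𝕜] [NormedAddCommGroup E] [InnerProductSpace 𝕜 E]
  [CompleteSpace E] [NormedAddCommGroup F] [InnerProductSpace 𝕜 F] [CompleteSpace F]
  {u : ι → E} {v : ι → F}

/-- The synthesis operator `c ↦ ∑ i, c i • u i` of an orthonormal family `u`, as an isometry
from `ℓ²`. -/
noncomputable def synthesis (hu : Orthonormal 𝕜 u) : ℓ²(ι, 𝕜) →L[𝕜] E :=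
  hu.orthogonalFamily.linearIsometry.toContinuousLinearMap

lemma synthesis_single [DecidableEq ι] (hu : Orthonormal 𝕜 u) (i : ι) :
    synthesis hu (lp.single 2 i 1) = u i := by
  simp [synthesis]

lemma adjoint_synthesis_apply (hu : Orthonormal 𝕜 u) (x : E) (i : ι) :
    (synthesis hu).adjoint x i = ⟪u i, x⟫_𝕜 := by
  classical
  rw [← synthesis_single hu i, ← ContinuousLinearMap.adjoint_inner_right, lp.inner_single_left,
    RCLike.inner_apply, map_one, mul_one]

/-- The partial isometry `x ↦ ∑ i, ⟪u i, x⟫ • v i`, which maps each member of the orthonormal family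
`u` to the corresponding member of `v` and vanishes on the orthogonal complement of `u`. -/
noncomputable def partialIsometry (hu : Orthonormal 𝕜 u) (hv : Orthonormal 𝕜 v) : E →L[𝕜] F :=
  synthesis hv ∘L (synthesis hu).adjoint

lemma partialIsometry_apply_self (hu : Orthonormal 𝕜 u) (hv : Orthonormal 𝕜 v) (i : ι) :
    partialIsometry hu hv (u i) = v i := by
  classical
  have : (synthesis hu).adjoint (u i) = lp.single 2 i 1 := by
    ext j
    rw [adjoint_synthesis_apply, orthonormal_iff_ite.mp hu, lp.single_apply, Pi.single_apply]
  rw [partialIsometry, ContinuousLinearMap.comp_apply, this, synthesis_single]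

lemma partialIsometry_apply_eq_zero (hu : Orthonormal 𝕜 u) (hv : Orthonormal 𝕜 v) {x : E}
    (hx : ∀ i, ⟪u i, x⟫_𝕜 = 0) : partialIsometry hu hv x = 0 := by
  have : (synthesis hu).adjoint x = 0 := lp.ext <| funext fun i => by
    rw [adjoint_synthesis_apply, hx i]; rfl
  rw [partialIsometry, ContinuousLinearMap.comp_apply, this, map_zero]

lemma adjoint_partialIsometry (hu : Orthonormal 𝕜 u) (hv : Orthonormal 𝕜 v) :
    (partialIsometry hu hv).adjoint = partialIsometry hv hu := by
  rw [partialIsometry, ContinuousLinearMap.adjoint_comp, ContinuousLinearMap.adjoint_adjoint,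
    partialIsometry]

end PartialIsometry

section Diagonal

variable {ι 𝕜 E : Type*} [RCLike 𝕜] [NormedAddCommGroup E] [InnerProductSpace 𝕜 E]

/-- The operator with diagonal entries `a` in the Hilbert basis `e`, as a bare map in `a`;
`diagonalOp` bundles it into a star homomorphism. -/
noncomputable def diagonalCLM (e : HilbertBasis ι 𝕜 E) (a : ℓ^∞(ι, 𝕜)) : E →L[𝕜] E :=
  e.repr.symm.toContinuousLinearEquiv.toContinuousLinearMap ∘L
    lp.holderL 2 (fun _ => ContinuousLinearMap.mul 𝕜 𝕜) (K := 1)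
      (fun _ => ContinuousLinearMap.opNorm_mul_le 𝕜 𝕜) a ∘L
    e.repr.toContinuousLinearEquiv.toContinuousLinearMap

lemma repr_diagonalCLM (e : HilbertBasis ι 𝕜 E) (a : ℓ^∞(ι, 𝕜)) (x : E) (i : ι) :
    e.repr (diagonalCLM e a x) i = a i * e.repr x i := by
  simp [diagonalCLM, lp.holderL]

lemma clm_ext_repr (e : HilbertBasis ι 𝕜 E) {A B : E →L[𝕜] E}
    (h : ∀ x i, e.repr (A x) i = e.repr (B x) i) : A = B :=
  ContinuousLinearMap.ext fun x => e.repr.injective <| lp.ext <| funext <| h x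

variable [CompleteSpace E]

/-- The operator that is diagonal in the Hilbert basis `e`, with the bounded family `a` as its
diagonal entries. -/
noncomputable def diagonalOp (e : HilbertBasis ι 𝕜 E) :
    ℓ^∞(ι, 𝕜) →⋆ₐ[𝕜] (E →L[𝕜] E) where
  toFun := diagonalCLM e
  map_one' := clm_ext_repr e fun x i => by simp [repr_diagonalCLM]
  map_mul' a b := clm_ext_repr e fun x i => by simp [repr_diagonalCLM, mul_assoc]
  map_zero' := clm_ext_repr e fun x i => by simp [repr_diagonalCLM]
  map_add' a b := clm_ext_repr e fun x i => by simp [repr_diagonalCLM, add_mul]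
  commutes' c := clm_ext_repr e fun x i => by
    simp [repr_diagonalCLM, Algebra.algebraMap_eq_smul_one]
  map_star' a := by
    rw [ContinuousLinearMap.star_eq_adjoint]
    refine (ContinuousLinearMap.eq_adjoint_iff _ _).mpr fun x y => ?_
    rw [← e.repr.inner_map_map, ← e.repr.inner_map_map, lp.inner_eq_tsum, lp.inner_eq_tsum]
    refine tsum_congr fun i => ?_
    simp [repr_diagonalCLM, RCLike.inner_apply]
    ring

lemma repr_diagonalOp (e : HilbertBasis ι 𝕜 E) (a : ℓ^∞(ι, 𝕜)) (x : E) (i : ι) :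
    e.repr (diagonalOp e a x) i = a i * e.repr x i :=
  repr_diagonalCLM e a x i

lemma diagonalOp_apply_basis (e : HilbertBasis ι 𝕜 E) (a : ℓ^∞(ι, 𝕜)) (i : ι) :
    diagonalOp e a (e i) = a i • e i := by
  classical
  refine e.repr.injective <| lp.ext <| funext fun j => ?_
  by_cases h : j = i <;> simp [repr_diagonalOp, e.repr_self, h]

lemma memℓp_infty_of_norm_le {a : ι → 𝕜} {c : ℝ} (h : ∀ i, ‖a i‖ ≤ c) : Memℓp a ∞ :=
  memℓp_infty ⟨c, by rintro _ ⟨i, rfl⟩; exact h i⟩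

lemma exists_diagonalOp_eq {e : HilbertBasis ι 𝕜 E} {A : E →L[𝕜] E} {c : ι → 𝕜}
    (hA : ∀ i, A (e i) = c i • e i) :
    ∃ a : ℓ^∞(ι, 𝕜), (∀ i, a i = c i) ∧ diagonalOp e a = A := by
  have hbound : ∀ i, ‖c i‖ ≤ ‖A‖ := fun i => by
    simpa [hA, norm_smul, e.orthonormal.1 i] using A.le_opNorm (e i)
  exact ⟨⟨c, memℓp_infty_of_norm_le hbound⟩, fun _ => rfl, hilbertBasis_ext_clm e fun i => by
    rw [diagonalOp_apply_basis, hA]⟩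

lemma mem_range_diagonalOp {e : HilbertBasis ι 𝕜 E} {A : E →L[𝕜] E} :
    A ∈ Set.range (diagonalOp e) ↔ ∀ i, ∃ c : 𝕜, A (e i) = c • e i := by
  refine ⟨?_, fun h => ?_⟩
  · rintro ⟨a, rfl⟩ i
    exact ⟨a i, diagonalOp_apply_basis e a i⟩
  · choose c hc using h
    obtain ⟨a, -, ha⟩ := exists_diagonalOp_eq hc
    exact ⟨a, ha⟩

lemma exists_eq_smul_of_rankOne_self_mem_range [Nonempty ι] {e : HilbertBasis ι 𝕜 E} {x : E}
    (hx : rankOne 𝕜 x x ∈ Set.range (diagonalOp e)) : ∃ (c : 𝕜) (k : ι), x = c • e k := by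
  by_cases h0 : ∀ k, ⟪e k, x⟫_𝕜 = 0
  · refine ⟨0, Classical.arbitrary ι, ?_⟩
    rw [zero_smul]
    exact hilbertBasis_ext_inner e fun k => by rw [h0, inner_zero_right]
  · push Not at h0
    obtain ⟨k, hk⟩ := h0
    obtain ⟨c, hc⟩ := mem_range_diagonalOp.mp hx k
    refine ⟨(⟪x, e k⟫_𝕜)⁻¹ * c, k, ?_⟩
    rw [mul_smul, ← hc, InnerProductSpace.rankOne_apply,
      inv_smul_smul₀ fun h => hk (inner_eq_zero_symm.mp h)]

end Diagonal

namespace IsOperatorIdeal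

variable {ι H : Type*} [NormedAddCommGroup H] [InnerProductSpace ℂ H]
  {I : Set (H →L[ℂ] H)} {A B : H →L[ℂ] H}

lemma zero_mem (hI : IsOperatorIdeal I) : (0 : H →L[ℂ] H) ∈ I := hI.1

lemma add_mem (hI : IsOperatorIdeal I) (hA : A ∈ I) (hB : B ∈ I) : A + B ∈ I := hI.2.1 A B hA hB

lemma smul_mem (hI : IsOperatorIdeal I) (c : ℂ) (hA : A ∈ I) : c • A ∈ I := hI.2.2.1 c A hA

lemma mul_mem_left (hI : IsOperatorIdeal I) (T : H →L[ℂ] H) (hA : A ∈ I) : T * A ∈ I :=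
  (hI.2.2.2 T A hA).1

lemma mul_mem_right (hI : IsOperatorIdeal I) (T : H →L[ℂ] H) (hA : A ∈ I) : A * T ∈ I :=
  (hI.2.2.2 T A hA).2

lemma sum_mem (hI : IsOperatorIdeal I) {s : Finset ι} {f : ι → H →L[ℂ] H} (h : ∀ i ∈ s, f i ∈ I) :
    ∑ i ∈ s, f i ∈ I :=
  Finset.sum_induction f (· ∈ I) (fun _ _ => hI.add_mem) hI.zero_mem h

lemma eq_univ_of_one_mem (hI : IsOperatorIdeal I) (h : 1 ∈ I) : I = Set.univ :=
  Set.eq_univ_of_forall fun T => mul_one T ▸ hI.mul_mem_left T h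

lemma rankOne_mem (hI : IsOperatorIdeal I) (hne : ∃ T ∈ I, T ≠ 0) (x y : H) :
    rankOne ℂ x y ∈ I := by
  obtain ⟨T, hT, hT0⟩ := hne
  obtain ⟨v, hv⟩ : ∃ v, T v ≠ 0 := by
    simpa using ContinuousLinearMap.ext_iff.not.mp hT0
  have hfactor : rankOne ℂ x y = (⟪T v, T v⟫_ℂ)⁻¹ •
      (rankOne ℂ x (T v) * (T * rankOne ℂ v y)) := by
    rw [ContinuousLinearMap.mul_def, ContinuousLinearMap.mul_def, comp_rankOne,
      rankOne_comp_rankOne, inv_smul_smul₀ (inner_self_ne_zero.mpr hv)]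
  rw [hfactor]
  exact hI.smul_mem _ (hI.mul_mem_left _ (hI.mul_mem_right _ hT))

lemma infinite_of_one_notMem (hI : IsOperatorIdeal I) (hne : ∃ T ∈ I, T ≠ 0) (h1 : 1 ∉ I)
    (e : HilbertBasis ι ℂ H) : Infinite ι := by
  by_contra hfin
  rw [not_infinite_iff_finite] at hfin
  have := Fintype.ofFinite ι
  refine h1 ?_
  rw [ContinuousLinearMap.one_def, ← e.toOrthonormalBasis.sum_rankOne_eq_id]
  exact hI.sum_mem fun i _ => hI.rankOne_mem hne _ _

variable [CompleteSpace H]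

lemma diagonalOp_mem_of_norm_le (hI : IsOperatorIdeal I) {e : HilbertBasis ι ℂ H}
    {a b : ℓ^∞(ι, ℂ)} {c : ℝ} (hab : ∀ i, ‖b i‖ ≤ c * ‖a i‖) (ha : diagonalOp e a ∈ I) :
    diagonalOp e b ∈ I := by
  have hquot : ∀ i, ‖b i / a i‖ ≤ |c| := fun i => by
    rw [norm_div]
    exact div_le_of_le_mul₀ (norm_nonneg _) (abs_nonneg c)
      ((hab i).trans (by gcongr; exact le_abs_self c))
  let q : ℓ^∞(ι, ℂ) := ⟨fun i => b i / a i, memℓp_infty_of_norm_le hquot⟩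
  have hb : b = q * a := lp.ext <| funext fun i => by
    refine (div_mul_cancel_of_imp fun hai => ?_).symm
    simpa [hai] using hab i
  rw [hb, map_mul]
  exact hI.mul_mem_left _ ha

/-- The product of the two diagonals is `b * (a * P) + a * (b * (1 - P))` for the diagonal
projection `P` onto the span of the `e i` with `X (e i) = 0`. -/
lemma diagonalOp_mul_mem (hI : IsOperatorIdeal I) {e : HilbertBasis ι ℂ H} {a b : ℓ^∞(ι, ℂ)}
    {X Y : H →L[ℂ] H} (hX : diagonalOp e a - X ∈ I) (hY : diagonalOp e b - Y ∈ I)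
    (hXY : ∀ i, X (e i) = 0 ∨ Y (e i) = 0) : diagonalOp e (a * b) ∈ I := by
  classical
  let p : ℓ^∞(ι, ℂ) := ⟨fun i => if X (e i) = 0 then 1 else 0,
    memℓp_infty_of_norm_le (c := 1) fun i => by split_ifs <;> simp⟩
  have hXp : X * diagonalOp e p = 0 := hilbertBasis_ext_clm e fun i => by
    by_cases hi : X (e i) = 0 <;> simp [diagonalOp_apply_basis, p, hi]
  have hYp : Y * diagonalOp e (1 - p) = 0 := hilbertBasis_ext_clm e fun i => by
    by_cases hi : X (e i) = 0
    · simp [diagonalOp_apply_basis, p, hi]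
    · simp [diagonalOp_apply_basis, p, hi, (hXY i).resolve_left hi]
  have hap : diagonalOp e (a * p) ∈ I := by
    simpa only [sub_mul, hXp, sub_zero, ← map_mul] using hI.mul_mem_right (diagonalOp e p) hX
  have hbp : diagonalOp e (b * (1 - p)) ∈ I := by
    simpa only [sub_mul, hYp, sub_zero, ← map_mul] using hI.mul_mem_right (diagonalOp e (1 - p)) hY
  have hsplit : a * b = b * (a * p) + a * (b * (1 - p)) := by ring
  rw [hsplit, map_add, map_mul _ b (a * p), map_mul _ a (b * (1 - p))]
  exact hI.add_mem (hI.mul_mem_left _ hap) (hI.mul_mem_left _ hbp)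

end IsOperatorIdeal

section Compactness

variable {𝕜 E F : Type*} [RCLike 𝕜] [NormedAddCommGroup E] [InnerProductSpace 𝕜 E]

lemma isCompactOperator_of_forall_exists_norm_comp_le [NormedAddCommGroup F] [NormedSpace 𝕜 F]
    [CompleteSpace F] {T : E →L[𝕜] F}
    (h : ∀ ε > 0, ∃ K : Submodule 𝕜 E, FiniteDimensional 𝕜 K ∧ ‖T ∘L Kᗮ.subtypeL‖ ≤ ε) :
    IsCompactOperator T := by
  suffices T ∈ closure {S : E →L[𝕜] F | IsCompactOperator S} by
    rwa [isClosed_setOfPred_isCompactOperator.closure_eq] at this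
  refine Metric.mem_closure_iff.mpr fun ε hε => ?_
  obtain ⟨K, hK, hle⟩ := h (ε / 2) (half_pos hε)
  have := FiniteDimensional.proper 𝕜 K
  refine ⟨T ∘L K.starProjection, (isCompactOperator_of_locallyCompactSpace_dom
    K.orthogonalProjectionOnto).clm_comp (T ∘L K.subtypeL), ?_⟩
  have hsub : T - T ∘L K.starProjection = (T ∘L Kᗮ.subtypeL) ∘L Kᗮ.orthogonalProjectionOnto := by
    ext x
    simp [Submodule.starProjection_orthogonal_val]
  calc dist T (T ∘L K.starProjection)
      ≤ ‖T ∘L Kᗮ.subtypeL‖ * ‖Kᗮ.orthogonalProjectionOnto‖ := by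
        rw [dist_eq_norm, hsub]
        exact ContinuousLinearMap.opNorm_comp_le _ _
    _ ≤ ε / 2 * 1 := by
        gcongr
        exact Submodule.orthogonalProjectionOnto_norm_le _
    _ < ε := by linarith

variable [NormedAddCommGroup F] [InnerProductSpace 𝕜 F] [CompleteSpace E] [CompleteSpace F]

lemma exists_orthonormal_of_not_isCompactOperator {T : E →L[𝕜] F} (hT : ¬ IsCompactOperator T) :
    ∃ ε > 0, ∃ x : ℕ → E, Orthonormal 𝕜 x ∧ (∀ n, ε ≤ ‖T (x n)‖) ∧
      Pairwise fun m n => ⟪T (x m), T (x n)⟫_𝕜 = 0 := by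
  classical
  obtain ⟨ε, hε, hlarge⟩ : ∃ ε > 0, ∀ K : Submodule 𝕜 E, FiniteDimensional 𝕜 K →
      ε < ‖T ∘L Kᗮ.subtypeL‖ := by
    contrapose! hT
    exact isCompactOperator_of_forall_exists_norm_comp_le hT
  have hunit : ∀ K : Submodule 𝕜 E, FiniteDimensional 𝕜 K → ∃ x ∈ Kᗮ, ‖x‖ = 1 ∧ ε ≤ ‖T x‖ := by
    intro K hK
    by_contra! hsmall
    exact (hlarge K hK).not_ge (ContinuousLinearMap.opNorm_le_of_unit_norm hε.le
      fun x hx => (hsmall x x.2 hx).le)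
  have : Std.Symm fun x y : E => ⟪x, y⟫_𝕜 = 0 ∧ ⟪T x, T y⟫_𝕜 = 0 :=
    ⟨fun _ _ h => ⟨inner_eq_zero_symm.mp h.1, inner_eq_zero_symm.mp h.2⟩⟩
  obtain ⟨x, hx, hpair⟩ := exists_seq_of_forall_finset_exists'
    (fun x : E => ‖x‖ = 1 ∧ ε ≤ ‖T x‖) (fun x y => ⟪x, y⟫_𝕜 = 0 ∧ ⟪T x, T y⟫_𝕜 = 0)
    fun s _ => by
      let t : Finset E := s ∪ s.image fun x => T.adjoint (T x)
      obtain ⟨y, hy, hy1, hTy⟩ := hunit (Submodule.span 𝕜 t) inferInstance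
      have horth : ∀ z ∈ t, ⟪z, y⟫_𝕜 = 0 := fun z hz => hy z (Submodule.subset_span hz)
      refine ⟨y, ⟨hy1, hTy⟩, fun z hz => ⟨horth z (Finset.mem_union_left _ hz), ?_⟩⟩
      rw [← ContinuousLinearMap.adjoint_inner_left]
      exact horth _ (Finset.mem_union_right _ (Finset.mem_image_of_mem _ hz))
  exact ⟨ε, hε, x, ⟨fun n => (hx n).1, fun m n hmn => (hpair hmn).1⟩, fun n => (hx n).2,
    fun m n hmn => (hpair hmn).2⟩

end Compactness

namespace IsOperatorIdeal

variable {H : Type*} [NormedAddCommGroup H] [InnerProductSpace ℂ H] [CompleteSpace H]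
  {J : Set (H →L[ℂ] H)}

/-- If `T ∈ J` is not compact, it is bounded below on an orthonormal sequence with orthogonal
images; carrying this sequence to `b` turns `T* T` into an invertible diagonal element of `J`. -/
lemma isCompactOperator_of_mem (hJ : IsOperatorIdeal J) (hJne : J ≠ Set.univ)
    (b : HilbertBasis ℕ ℂ H) {T : H →L[ℂ] H} (hT : T ∈ J) : IsCompactOperator T := by
  by_contra hcomp
  obtain ⟨ε, hε, x, hx, hlow, horth⟩ := exists_orthonormal_of_not_isCompactOperator hcomp
  let U : H →L[ℂ] H := partialIsometry b.orthonormal hx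
  have hU : ∀ n, U (b n) = x n := partialIsometry_apply_self b.orthonormal hx
  have hinner : ∀ m n, ⟪b m, (star (T * U) * (T * U)) (b n)⟫_ℂ = ⟪T (x m), T (x n)⟫_ℂ := by
    simp [ContinuousLinearMap.star_eq_adjoint, ContinuousLinearMap.adjoint_inner_right, hU]
  have hdiag : ∀ n, (star (T * U) * (T * U)) (b n) = ⟪T (x n), T (x n)⟫_ℂ • b n := fun n => by
    refine hilbertBasis_ext_inner b fun m => ?_
    rw [hinner, inner_smul_right, orthonormal_iff_ite.mp b.orthonormal]
    split_ifs with hmn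
    · rw [hmn, mul_one]
    · rw [horth hmn, mul_zero]
  obtain ⟨a, ha_apply, ha⟩ := exists_diagonalOp_eq hdiag
  refine hJne (hJ.eq_univ_of_one_mem ?_)
  rw [← map_one (diagonalOp b)]
  refine hJ.diagonalOp_mem_of_norm_le (a := a) (c := (ε ^ 2)⁻¹) (fun n => ?_)
    (ha ▸ hJ.mul_mem_left _ (hJ.mul_mem_right _ hT))
  rw [lp.infty_coeFn_one, Pi.one_apply, norm_one, ha_apply, inner_self_eq_norm_sq_to_K,
    norm_pow, RCLike.norm_ofReal, abs_norm, ← div_eq_inv_mul, one_le_div (by positivity)]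
  exact pow_le_pow_left₀ hε.le (hlow n) 2

end IsOperatorIdeal

section Spectral

universe u v w

variable {𝕜 : Type u} {E : Type v} [RCLike 𝕜] [NormedAddCommGroup E] [InnerProductSpace 𝕜 E]
  [CompleteSpace E]

lemma exists_hilbertBasis_of_orthogonalFamily {κ : Type w} {G : κ → Submodule 𝕜 E}
    [∀ k, CompleteSpace (G k)] (hG : OrthogonalFamily 𝕜 (fun k => G k) fun k => (G k).subtypeₗᵢ)
    (htotal : (⨆ k, G k)ᗮ = ⊥) :
    ∃ (ι : Type (max v w)) (e : HilbertBasis ι 𝕜 E), ∀ i, ∃ k, e i ∈ G k := by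
  choose s b _ using fun k => exists_hilbertBasis 𝕜 (G k)
  let u : (Σ k, s k) → E := fun p => (b p.1 p.2 : G p.1)
  have hu : Orthonormal 𝕜 u := hG.orthonormal_sigma_orthonormal fun k => (b k).orthonormal
  have hspan : (Submodule.span 𝕜 (Set.range u))ᗮ = ⊥ := by
    refine eq_bot_iff.mpr (htotal ▸ fun x hx => ?_)
    rw [← Submodule.iInf_orthogonal, Submodule.mem_iInf]
    intro k
    rw [← Submodule.orthogonalProjectionOnto_eq_zero_iff]
    refine hilbertBasis_ext_inner (b k) fun i => ?_
    rw [inner_zero_right, Submodule.inner_orthogonalProjectionOnto_eq_of_mem_left]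
    exact hx _ (Submodule.subset_span ⟨⟨k, i⟩, rfl⟩)
  refine ⟨Σ k, s k, HilbertBasis.mkOfOrthogonalEqBot hu hspan, fun p => ⟨p.1, ?_⟩⟩
  rw [HilbertBasis.coe_mkOfOrthogonalEqBot]
  exact (b p.1 p.2).2

lemma exists_hilbertBasis_eigenvectors {A : E →L[𝕜] E} (hA : IsCompactOperator A)
    (hsymm : (A : E →ₗ[𝕜] E).IsSymmetric) :
    ∃ (ι : Type (max u v)) (e : HilbertBasis ι 𝕜 E), ∀ i, ∃ μ : 𝕜, A (e i) = μ • e i := by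
  have hclosed : ∀ μ : 𝕜, CompleteSpace (Module.End.eigenspace (A : E →ₗ[𝕜] E) μ) := fun μ => by
    have : IsClosed {x | A x = μ • x} := isClosed_eq A.continuous (continuous_const_smul μ)
    refine IsClosed.completeSpace_coe (hs := ?_)
    convert this using 1
    ext x
    simp
  obtain ⟨ι, e, he⟩ := exists_hilbertBasis_of_orthogonalFamily hsymm.orthogonalFamily_eigenspaces
    (A.orthogonalComplement_iSup_eigenspaces_eq_bot hA hsymm)
  exact ⟨ι, e, fun i => (he i).imp fun μ hμ => Module.End.mem_eigenspace_iff.mp hμ⟩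

variable {F : Type w} [NormedAddCommGroup F] [InnerProductSpace 𝕜 F] [CompleteSpace F]

lemma exists_hilbertBasis_orthogonal_images {T : E →L[𝕜] F} (hT : IsCompactOperator T) :
    ∃ (ι : Type (max u v)) (e : HilbertBasis ι 𝕜 E),
      Pairwise fun i j => ⟪T (e i), T (e j)⟫_𝕜 = 0 := by
  obtain ⟨ι, e, he⟩ := exists_hilbertBasis_eigenvectors (A := T.adjoint ∘L T)
    (hT.clm_comp T.adjoint) (ContinuousLinearMap.isPositive_adjoint_comp_self T).isSymmetric
  refine ⟨ι, e, fun i j hij => ?_⟩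
  obtain ⟨μ, hμ⟩ := he j
  rw [← ContinuousLinearMap.adjoint_inner_right, ← ContinuousLinearMap.comp_apply, hμ,
    inner_smul_right, e.orthonormal.2 hij, mul_zero]

lemma exists_polar_decomposition {T : E →L[𝕜] F} (hT : IsCompactOperator T) :
    ∃ (ι : Type (max u v)) (e : HilbertBasis ι 𝕜 E) (a : ℓ^∞(ι, 𝕜)) (V : E →L[𝕜] F),
      T = V ∘L diagonalOp e a ∧ diagonalOp e a = V.adjoint ∘L T := by
  obtain ⟨ι, e, he⟩ := exists_hilbertBasis_orthogonal_images hT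
  have hu : Orthonormal 𝕜 fun i : {i // T (e i) ≠ 0} => e i :=
    e.orthonormal.comp _ Subtype.val_injective
  have hv : Orthonormal 𝕜 fun i : {i // T (e i) ≠ 0} => (‖T (e i)‖ : 𝕜)⁻¹ • T (e i) := by
    refine ⟨fun i => norm_smul_inv_norm i.2, fun i j hij => ?_⟩
    beta_reduce
    rw [inner_smul_left, inner_smul_right, he (Subtype.coe_ne_coe.mpr hij), mul_zero, mul_zero]
  let V := partialIsometry hu hv
  let a : ℓ^∞(ι, 𝕜) := ⟨fun i => ‖T (e i)‖, memℓp_infty_of_norm_le (c := ‖T‖) fun i => by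
    simpa [e.orthonormal.1 i] using T.le_opNorm (e i)⟩
  have ha : ∀ i, a i = ‖T (e i)‖ := fun _ => rfl
  have hVD : ∀ i, T (e i) = V (diagonalOp e a (e i)) := fun i => by
    rw [diagonalOp_apply_basis, ha, map_smul]
    by_cases hi : T (e i) = 0
    · rw [hi, norm_zero, RCLike.ofReal_zero, zero_smul]
    · rw [partialIsometry_apply_self hu hv ⟨i, hi⟩, smul_inv_smul₀ (by simpa using hi)]
  have hVT : ∀ i, diagonalOp e a (e i) = V.adjoint (T (e i)) := fun i => by
    rw [diagonalOp_apply_basis, ha]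
    by_cases hi : T (e i) = 0
    · rw [hi, norm_zero, RCLike.ofReal_zero, zero_smul, map_zero]
    · have hnorm : (‖T (e i)‖ : 𝕜) ≠ 0 := by simpa using hi
      conv_rhs => rw [← smul_inv_smul₀ hnorm (T (e i))]
      rw [map_smul, adjoint_partialIsometry, partialIsometry_apply_self hv hu ⟨i, hi⟩]
  exact ⟨ι, e, a, V, hilbertBasis_ext_clm e hVD, hilbertBasis_ext_clm e hVT⟩

end Spectral

section Splitting

variable {ι 𝕜 H : Type*} [RCLike 𝕜] [NormedAddCommGroup H] [InnerProductSpace 𝕜 H]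
  [CompleteSpace H]

/-- A splitting of the Hilbert basis `e` into two halves: `E` and `F` are isometries with orthogonal
ranges, `E` maps the basis into itself, and each basis vector is orthogonal to the range
of `E` or to that of `F`. -/
structure IsBasisSplitting (e : HilbertBasis ι 𝕜 H) (E F : H →L[𝕜] H) : Prop where
  star_left_mul_left : star E * E = 1
  star_right_mul_right : star F * F = 1
  star_right_mul_left : star F * E = 0
  left_apply_basis : ∀ i, ∃ j, E (e i) = e j
  star_apply_basis : ∀ k, star E (e k) = 0 ∨ star F (e k) = 0

lemma exists_isBasisSplitting [Infinite ι] (e : HilbertBasis ι 𝕜 H) :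
    ∃ E F : H →L[𝕜] H, IsBasisSplitting e E F := by
  obtain ⟨φ⟩ : Nonempty (ι ⊕ ι ≃ ι) := Cardinal.eq.mp <| by
    rw [Cardinal.mk_sum, Cardinal.lift_id, Cardinal.add_eq_self (Cardinal.aleph0_le_mk ι)]
  have hl : Orthonormal 𝕜 fun i => e (φ (.inl i)) :=
    e.orthonormal.comp _ (φ.injective.comp Sum.inl_injective)
  have hr : Orthonormal 𝕜 fun i => e (φ (.inr i)) :=
    e.orthonormal.comp _ (φ.injective.comp Sum.inr_injective)
  have hlr : ∀ i j, ⟪e (φ (.inl i)), e (φ (.inr j))⟫_𝕜 = 0 := fun i j =>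
    e.orthonormal.2 (φ.injective.ne Sum.inl_ne_inr)
  have hrl : ∀ i j, ⟪e (φ (.inr i)), e (φ (.inl j))⟫_𝕜 = 0 := fun i j =>
    inner_eq_zero_symm.mp (hlr j i)
  have hE := partialIsometry_apply_self e.orthonormal hl
  have hF := partialIsometry_apply_self e.orthonormal hr
  refine ⟨partialIsometry e.orthonormal hl, partialIsometry e.orthonormal hr, ?_, ?_, ?_,
    fun i => ⟨_, hE i⟩, fun k => ?_⟩
  all_goals simp only [ContinuousLinearMap.star_eq_adjoint, adjoint_partialIsometry]
  · exact hilbertBasis_ext_clm e fun i => by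
      simp [hE, partialIsometry_apply_self hl]
  · exact hilbertBasis_ext_clm e fun i => by
      simp [hF, partialIsometry_apply_self hr]
  · exact hilbertBasis_ext_clm e fun i => by
      simp [hE, partialIsometry_apply_eq_zero hr _ fun j => hrl j i]
  · obtain ⟨i | i, rfl⟩ := φ.surjective k
    · exact .inr (partialIsometry_apply_eq_zero hr _ fun j => hrl j i)
    · exact .inl (partialIsometry_apply_eq_zero hl _ fun j => hlr j i)

end Splitting

section ExtendAlong

variable {R : Type*} [Ring R] [StarRing R]

/-- The multiplicative extension `u ↦ 1 + g * (u - 1) * star g` along an isometry `g`: it acts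
as `u` on the range of `g` and as the identity on the orthogonal complement. -/
def extendAlong (g : R) (hg : star g * g = 1) : R →⋆* R where
  toFun u := 1 + g * (u - 1) * star g
  map_one' := by simp
  map_mul' u v := by
    have hcancel : ∀ x, star g * (g * x) = x := fun x => by rw [← mul_assoc, hg, one_mul]
    have : g * (u - 1) * star g * (g * (v - 1) * star g) = g * (u - 1) * (v - 1) * star g := by
      simp only [mul_assoc, hcancel]
    simp only [add_mul, mul_add, this]
    noncomm_ring
  map_star' u := by simp [mul_assoc]

lemma extendAlong_sub_one (g : R) (hg : star g * g = 1) (u : R) :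
    extendAlong g hg u - 1 = g * (u - 1) * star g :=
  add_sub_cancel_left 1 _

end ExtendAlong

section Phase

open Real

variable {ι : Type*}

/-- The unitary element `exp (i t |a|)` of `ℓ^∞`. -/
noncomputable def phase (a : ℓ^∞(ι, ℂ)) (t : ℝ) : unitary ℓ^∞(ι, ℂ) :=
  ⟨⟨fun i => Circle.exp (t * ‖a i‖), memℓp_infty_of_norm_le fun _ => (Circle.norm_coe _).le⟩, by
    rw [Unitary.mem_iff_star_mul_self]
    refine lp.ext <| funext fun i => ?_
    simp only [lp.infty_coeFn_mul, lp.infty_coeFn_one, Pi.mul_apply, Pi.one_apply, lp.star_apply,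
      RCLike.star_def, Complex.conj_mul', Circle.norm_coe, Complex.ofReal_one, one_pow]⟩

lemma phase_apply (a : ℓ^∞(ι, ℂ)) (t : ℝ) (i : ι) :
    (phase a t : ℓ^∞(ι, ℂ)) i = Circle.exp (t * ‖a i‖) := rfl

lemma phase_mul_phase (a : ℓ^∞(ι, ℂ)) (s t : ℝ) : phase a s * phase a t = phase a (s + t) := by
  ext i
  simp [phase_apply, add_mul, Circle.exp_add]

lemma phase_sub_one_apply (a : ℓ^∞(ι, ℂ)) (t : ℝ) (i : ι) :
    ((phase a t : ℓ^∞(ι, ℂ)) - 1) i = Complex.exp (Complex.I * ↑(t * ‖a i‖)) - 1 := by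
  rw [lp.coeFn_sub, Pi.sub_apply, phase_apply, lp.infty_coeFn_one, Pi.one_apply, Circle.coe_exp,
    mul_comm Complex.I]

lemma norm_phase_sub_one_apply_le (a : ℓ^∞(ι, ℂ)) (t : ℝ) (i : ι) :
    ‖((phase a t : ℓ^∞(ι, ℂ)) - 1) i‖ ≤ |t| * ‖a i‖ := by
  rw [phase_sub_one_apply]
  refine Real.norm_exp_I_mul_ofReal_sub_one_le.trans_eq ?_
  rw [norm_eq_abs, abs_mul, abs_norm]

lemma le_norm_phase_sub_one_apply {a : ℓ^∞(ι, ℂ)} {t : ℝ} (ht : |t| * ‖a‖ ≤ π) (i : ι) :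
    2 / π * (|t| * ‖a i‖) ≤ ‖((phase a t : ℓ^∞(ι, ℂ)) - 1) i‖ := by
  have hle : |t| * ‖a i‖ ≤ π :=
    ht.trans' (by gcongr; exact lp.norm_apply_le_norm ENNReal.top_ne_zero a i)
  have habs : |t * ‖a i‖ / 2| = |t| * ‖a i‖ / 2 := by
    rw [abs_div, abs_mul, abs_norm, abs_two]
  have hsin := Real.mul_abs_le_abs_sin (x := t * ‖a i‖ / 2) (by linarith)
  rw [phase_sub_one_apply, Complex.norm_exp_I_mul_ofReal_sub_one, norm_mul, norm_ofNat,
    norm_eq_abs]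
  rw [habs] at hsin
  linarith

end Phase

section DiffIsometry

variable {ι 𝕜 H : Type*} [RCLike 𝕜] [NormedAddCommGroup H] [InnerProductSpace 𝕜 H]
  [CompleteSpace H] {e : HilbertBasis ι 𝕜 H} {E F : H →L[𝕜] H}

/-- The operator `(E - F) / √2`, which is an isometry if `E` and `F` are isometries with orthogonal
ranges. -/
noncomputable def diffIsometry (E F : H →L[𝕜] H) : H →L[𝕜] H :=
  ((√2 : ℝ) : 𝕜)⁻¹ • (E - F)

lemma inv_sqrt_two_mul_self : ((√2 : ℝ) : 𝕜)⁻¹ * ((√2 : ℝ) : 𝕜)⁻¹ = 2⁻¹ := by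
  rw [← mul_inv, ← RCLike.ofReal_mul, Real.mul_self_sqrt zero_le_two, RCLike.ofReal_ofNat]

namespace IsBasisSplitting

lemma star_left_mul_right (h : IsBasisSplitting e E F) : star E * F = 0 := by
  rw [← star_star (star E * F), star_mul, star_star, h.star_right_mul_left, star_zero]

lemma star_left_mul_diffIsometry (h : IsBasisSplitting e E F) :
    star E * diffIsometry E F = ((√2 : ℝ) : 𝕜)⁻¹ • 1 := by
  rw [diffIsometry, mul_smul_comm, mul_sub, h.star_left_mul_left, h.star_left_mul_right, sub_zero]

lemma star_right_mul_diffIsometry (h : IsBasisSplitting e E F) :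
    star F * diffIsometry E F = -(((√2 : ℝ) : 𝕜)⁻¹ • 1) := by
  rw [diffIsometry, mul_smul_comm, mul_sub, h.star_right_mul_left, h.star_right_mul_right, zero_sub,
    smul_neg]

lemma star_diffIsometry_mul_left (h : IsBasisSplitting e E F) :
    star (diffIsometry E F) * E = ((√2 : ℝ) : 𝕜)⁻¹ • 1 := by
  rw [← star_star (star (diffIsometry E F) * E), star_mul, star_star, h.star_left_mul_diffIsometry]
  simp

lemma star_diffIsometry_mul_self (h : IsBasisSplitting e E F) :
    star (diffIsometry E F) * diffIsometry E F = 1 := by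
  conv_lhs => rw [diffIsometry, star_smul, smul_mul_assoc, star_sub, sub_mul, ← diffIsometry,
    h.star_left_mul_diffIsometry, h.star_right_mul_diffIsometry]
  rw [sub_neg_eq_add, ← two_smul 𝕜, smul_smul, smul_smul, RCLike.star_def, map_inv₀,
    RCLike.conj_ofReal, mul_right_comm, inv_sqrt_two_mul_self, inv_mul_cancel₀ two_ne_zero,
    one_smul]

end IsBasisSplitting

end DiffIsometry

section Rotation

variable {ι H : Type*} [NormedAddCommGroup H] [InnerProductSpace ℂ H] [CompleteSpace H]
  {e : HilbertBasis ι ℂ H} {E F : H →L[ℂ] H}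

namespace IsBasisSplitting

/-- The one-parameter group of unitaries that act as `diagonalOp e (phase a t)` on the range of
`diffIsometry E F` and as the identity on its orthogonal complement. -/
noncomputable def rotation (h : IsBasisSplitting e E F) (a : ℓ^∞(ι, ℂ)) (t : ℝ) :
    unitary (H →L[ℂ] H) :=
  ⟨extendAlong _ h.star_diffIsometry_mul_self (diagonalOp e (phase a t)),
    Unitary.map_mem _ (Unitary.map_mem _ (phase a t).2)⟩

lemma rotation_mul_rotation (h : IsBasisSplitting e E F) (a : ℓ^∞(ι, ℂ)) (s t : ℝ) :
    h.rotation a s * h.rotation a t = h.rotation a (s + t) := by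
  ext1
  simp only [rotation, ← phase_mul_phase, Submonoid.coe_mul, map_mul]

lemma rotation_sub_one (h : IsBasisSplitting e E F) (a : ℓ^∞(ι, ℂ)) (t : ℝ) :
    (h.rotation a t : H →L[ℂ] H) - 1 =
      diffIsometry E F * diagonalOp e (phase a t - 1) * star (diffIsometry E F) := by
  rw [map_sub, map_one]
  exact extendAlong_sub_one _ h.star_diffIsometry_mul_self _

lemma mul_rotation_mul (h : IsBasisSplitting e E F) (a : ℓ^∞(ι, ℂ)) (t : ℝ)
    (S T : H →L[ℂ] H) :
    S * h.rotation a t * T = S * T + (S * diffIsometry E F) * diagonalOp e (phase a t - 1) *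
      (star (diffIsometry E F) * T) := by
  rw [← add_sub_cancel 1 (h.rotation a t : H →L[ℂ] H), h.rotation_sub_one]
  noncomm_ring

lemma star_left_mul_rotation_mul_left (h : IsBasisSplitting e E F) (a : ℓ^∞(ι, ℂ)) (t : ℝ) :
    star E * h.rotation a t * E = diagonalOp e ((2⁻¹ : ℂ) • (1 + phase a t)) := by
  rw [h.mul_rotation_mul, h.star_left_mul_left, h.star_left_mul_diffIsometry,
    h.star_diffIsometry_mul_left, smul_mul_assoc, one_mul, mul_smul_comm, mul_one, smul_smul,
    inv_sqrt_two_mul_self, ← map_smul, ← map_one (diagonalOp e), ← map_add]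
  congr 1
  module

lemma star_right_mul_rotation_mul_left (h : IsBasisSplitting e E F) (a : ℓ^∞(ι, ℂ)) (t : ℝ) :
    star F * h.rotation a t * E = diagonalOp e ((2⁻¹ : ℂ) • (1 - phase a t)) := by
  rw [h.mul_rotation_mul, h.star_right_mul_left, h.star_right_mul_diffIsometry,
    h.star_diffIsometry_mul_left, neg_mul, smul_mul_assoc, one_mul, neg_mul, mul_smul_comm, mul_one,
    smul_smul, inv_sqrt_two_mul_self, zero_add, ← map_smul, ← map_neg, ← smul_neg, neg_sub]

end IsBasisSplitting

lemma half_one_add_phase_mul_half_one_sub_phase (a : ℓ^∞(ι, ℂ)) (t : ℝ) :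
    ((2⁻¹ : ℂ) • (1 + (phase a t : ℓ^∞(ι, ℂ)))) * ((2⁻¹ : ℂ) • (1 - (phase a t : ℓ^∞(ι, ℂ)))) =
      (4⁻¹ : ℂ) • (1 - (phase a (2 * t) : ℓ^∞(ι, ℂ))) := by
  rw [smul_mul_smul_comm, two_mul, ← phase_mul_phase, Submonoid.coe_mul, ← mul_self_sub_mul_self]
  norm_num

namespace IsOperatorIdeal

lemma diagonalOp_phase_sub_one_mem {J : Set (H →L[ℂ] H)} (hJ : IsOperatorIdeal J)
    {a : ℓ^∞(ι, ℂ)} (ha : diagonalOp e a ∈ J) (t : ℝ) : diagonalOp e (phase a t - 1) ∈ J :=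
  hJ.diagonalOp_mem_of_norm_le (norm_phase_sub_one_apply_le a t) ha

lemma diagonalOp_mem_of_phase_sub_one_mem {I : Set (H →L[ℂ] H)} (hI : IsOperatorIdeal I)
    {a : ℓ^∞(ι, ℂ)} {t : ℝ} (ht0 : t ≠ 0) (ht : |t| * ‖a‖ ≤ Real.pi)
    (h : diagonalOp e (phase a t - 1) ∈ I) : diagonalOp e a ∈ I := by
  refine hI.diagonalOp_mem_of_norm_le (c := (2 / Real.pi * |t|)⁻¹) (fun i => ?_) h
  rw [← div_eq_inv_mul, le_div_iff₀ (by positivity), mul_comm, mul_assoc]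
  exact le_norm_phase_sub_one_apply ht i

end IsOperatorIdeal

namespace IsBasisSplitting

lemma rotation_sub_one_mem (h : IsBasisSplitting e E F) {J : Set (H →L[ℂ] H)}
    (hJ : IsOperatorIdeal J) {a : ℓ^∞(ι, ℂ)} (ha : diagonalOp e a ∈ J) (t : ℝ) :
    (h.rotation a t : H →L[ℂ] H) - 1 ∈ J := by
  rw [h.rotation_sub_one]
  exact hJ.mul_mem_right _ (hJ.mul_mem_left _ (hJ.diagonalOp_phase_sub_one_mem ha t))

lemma diagonalOp_mem_of_rotation_sub_mem (h : IsBasisSplitting e E F) {I : Set (H →L[ℂ] H)}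
    (hI : IsOperatorIdeal I) {a : ℓ^∞(ι, ℂ)} {t : ℝ} (ht0 : t ≠ 0) (ht : |2 * t| * ‖a‖ ≤ Real.pi)
    {V : H →L[ℂ] H} (hV : ∀ i, ∃ (c : ℂ) (k : ι), V (e i) = c • e k)
    (hmem : (h.rotation a t : H →L[ℂ] H) - V ∈ I) : diagonalOp e a ∈ I := by
  have hcompress : ∀ S : H →L[ℂ] H, S * h.rotation a t * E - S * V * E ∈ I := fun S => by
    rw [← sub_mul, ← mul_sub]
    exact hI.mul_mem_right _ (hI.mul_mem_left _ hmem)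
  have hcolumn : ∀ i, (star E * V * E) (e i) = 0 ∨ (star F * V * E) (e i) = 0 := fun i => by
    obtain ⟨j, hj⟩ := h.left_apply_basis i
    obtain ⟨c, k, hk⟩ := hV j
    refine (h.star_apply_basis k).imp (fun h0 => ?_) fun h0 => ?_ <;> simp [hj, hk, h0]
  have hprod := hI.diagonalOp_mul_mem
    (h.star_left_mul_rotation_mul_left a t ▸ hcompress (star E))
    (h.star_right_mul_rotation_mul_left a t ▸ hcompress (star F)) hcolumn
  rw [half_one_add_phase_mul_half_one_sub_phase, map_smul] at hprod
  refine hI.diagonalOp_mem_of_phase_sub_one_mem (mul_ne_zero two_ne_zero ht0) ht ?_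
  convert hI.smul_mem (-4) hprod using 1
  rw [smul_smul, ← map_smul, ← neg_sub]
  norm_num

end IsBasisSplitting

end Rotation

section Cartan

variable {ι H : Type*} [NormedAddCommGroup H] [InnerProductSpace ℂ H] [CompleteSpace H]
  {I J C : Set (H →L[ℂ] H)}

lemma IsCommSelfAdjointSubspace.image (hC : IsCommSelfAdjointSubspace I C)
    (φ : (H →L[ℂ] H) ≃⋆ₐ[ℂ] (H →L[ℂ] H)) (hφ : ∀ T ∈ I, φ T ∈ I) :
    IsCommSelfAdjointSubspace I (φ '' C) := by
  obtain ⟨hsub, hzero, hadd, hsmul, hstar, hcomm⟩ := hC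
  refine ⟨Set.image_subset_iff.mpr fun T hT => hφ T (hsub hT), ⟨0, hzero, map_zero φ⟩, ?_, ?_, ?_,
    ?_⟩
  · rintro _ _ ⟨S, hS, rfl⟩ ⟨T, hT, rfl⟩
    exact ⟨S + T, hadd S T hS hT, map_add φ S T⟩
  · rintro c _ ⟨T, hT, rfl⟩
    exact ⟨c • T, hsmul c T hT, map_smul φ c T⟩
  · rintro _ ⟨T, hT, rfl⟩
    exact ⟨star T, hstar T hT, map_star φ T⟩
  · rintro _ _ ⟨S, hS, rfl⟩ ⟨T, hT, rfl⟩
    rw [← map_mul, hcomm S T hS hT, map_mul]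

lemma IsCartanSubalgebra.image (hC : IsCartanSubalgebra I C)
    (φ : (H →L[ℂ] H) ≃⋆ₐ[ℂ] (H →L[ℂ] H)) (hφ : ∀ T, φ T ∈ I ↔ T ∈ I) :
    IsCartanSubalgebra I (φ '' C) := by
  refine ⟨hC.1.image φ fun T => (hφ T).mpr, fun C' hC' hsub => ?_⟩
  have hpull := hC.2 (φ.symm '' C') (hC'.image φ.symm fun T hT => by
    rwa [← hφ, φ.apply_symm_apply]) fun T hT => ⟨φ T, hsub ⟨T, hT, rfl⟩, φ.symm_apply_apply T⟩
  rw [← hpull, Set.image_image]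
  simp only [StarAlgEquiv.apply_symm_apply, Set.image_id']

/-- The operators in `I` that are diagonal in the Hilbert basis `e`. -/
def diagonalPart (e : HilbertBasis ι ℂ H) (I : Set (H →L[ℂ] H)) : Set (H →L[ℂ] H) :=
  I ∩ Set.range (diagonalOp e)

lemma isCommSelfAdjointSubspace_diagonalPart (hI : IsOperatorIdeal I) (e : HilbertBasis ι ℂ H) :
    IsCommSelfAdjointSubspace I (diagonalPart e I) := by
  refine ⟨Set.inter_subset_left, ⟨hI.zero_mem, 0, map_zero _⟩, ?_, ?_, ?_, ?_⟩
  · rintro _ _ ⟨hS, a, rfl⟩ ⟨hT, b, rfl⟩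
    exact ⟨hI.add_mem hS hT, a + b, map_add _ a b⟩
  · rintro c _ ⟨hT, a, rfl⟩
    exact ⟨hI.smul_mem c hT, c • a, map_smul _ c a⟩
  · rintro _ ⟨hT, a, rfl⟩
    rw [← map_star]
    exact ⟨hI.diagonalOp_mem_of_norm_le (c := 1) (fun i => by simp) hT, star a, rfl⟩
  · rintro _ _ ⟨-, a, rfl⟩ ⟨-, b, rfl⟩
    rw [← map_mul, mul_comm, map_mul]

lemma rankOne_self_mem_diagonalPart (hI : IsOperatorIdeal I) (hne : ∃ T ∈ I, T ≠ 0)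
    (e : HilbertBasis ι ℂ H) (i : ι) : rankOne ℂ (e i) (e i) ∈ diagonalPart e I := by
  classical
  refine ⟨hI.rankOne_mem hne _ _, mem_range_diagonalOp.mpr fun j => ?_⟩
  rw [InnerProductSpace.rankOne_apply, orthonormal_iff_ite.mp e.orthonormal]
  split_ifs with hij
  · exact ⟨1, by rw [hij]⟩
  · exact ⟨0, by rw [zero_smul, zero_smul]⟩

lemma isCartanSubalgebra_diagonalPart (hI : IsOperatorIdeal I) (hne : ∃ T ∈ I, T ≠ 0)
    (e : HilbertBasis ι ℂ H) : IsCartanSubalgebra I (diagonalPart e I) := by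
  refine ⟨isCommSelfAdjointSubspace_diagonalPart hI e, fun C' hC' hsub =>
    Set.Subset.antisymm (fun T hT => ⟨hC'.1 hT, mem_range_diagonalOp.mpr fun i => ?_⟩) hsub⟩
  have hcomm : T * rankOne ℂ (e i) (e i) = rankOne ℂ (e i) (e i) * T :=
    hC'.2.2.2.2.2 _ _ hT (hsub (rankOne_self_mem_diagonalPart hI hne e i))
  refine ⟨⟪e i, T (e i)⟫_ℂ, ?_⟩
  simpa [inner_self_eq_norm_sq_to_K, e.orthonormal.1 i] using congr($hcomm (e i))

lemma image_diagonalPart_inter {φ : (H →L[ℂ] H) → (H →L[ℂ] H)} (hφ : ∀ T, φ T ∈ I ↔ T ∈ I)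
    (hIJ : I ⊆ J) (e : HilbertBasis ι ℂ H) :
    φ '' diagonalPart e J ∩ I = φ '' diagonalPart e I := by
  have hpre : φ ⁻¹' I = I := Set.ext hφ
  rw [← Set.image_inter_preimage, hpre, diagonalPart, diagonalPart, Set.inter_right_comm,
    Set.inter_eq_self_of_subset_right hIJ]

lemma exists_apply_basis_eq_smul (hI : IsOperatorIdeal I) (hne : ∃ T ∈ I, T ≠ 0)
    {e : HilbertBasis ι ℂ H} {V : H →L[ℂ] H}
    (hV : ∀ T ∈ diagonalPart e I, V * T * star V ∈ Set.range (diagonalOp e)) (i : ι) :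
    ∃ (c : ℂ) (k : ι), V (e i) = c • e k := by
  have : Nonempty ι := ⟨i⟩
  refine exists_eq_smul_of_rankOne_self_mem_range ?_
  have := hV _ (rankOne_self_mem_diagonalPart hI hne e i)
  rwa [ContinuousLinearMap.mul_def, ContinuousLinearMap.mul_def, comp_rankOne, rankOne_comp,
    ContinuousLinearMap.star_eq_adjoint, ContinuousLinearMap.adjoint_adjoint] at this

end Cartan

section Conjugation

variable {ι H : Type*} [NormedAddCommGroup H] [InnerProductSpace ℂ H] [CompleteSpace H]
  {I J : Set (H →L[ℂ] H)} {e : HilbertBasis ι ℂ H} {E F : H →L[ℂ] H}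

lemma IsOperatorIdeal.conjStarAlgAut_mem_iff (hI : IsOperatorIdeal I) (W : unitary (H →L[ℂ] H))
    (T : H →L[ℂ] H) : Unitary.conjStarAlgAut ℂ _ W T ∈ I ↔ T ∈ I := by
  have hmem : ∀ (W : unitary (H →L[ℂ] H)) {T}, T ∈ I → Unitary.conjStarAlgAut ℂ _ W T ∈ I :=
    fun W T hT => hI.mul_mem_right _ (hI.mul_mem_left _ hT)
  refine ⟨fun h => ?_, hmem W⟩
  simpa only [← Unitary.conjStarAlgAut_mul_apply, Unitary.star_mul_self, map_one] using!
    hmem (star W) h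

namespace IsBasisSplitting

/-- The operators in `J` that are diagonal in the Hilbert basis obtained by applying
`h.rotation a t` to `e`. -/
noncomputable def rotatedDiagonalPart (h : IsBasisSplitting e E F) (a : ℓ^∞(ι, ℂ))
    (J : Set (H →L[ℂ] H)) (t : ℝ) : Set (H →L[ℂ] H) :=
  Unitary.conjStarAlgAut ℂ _ (h.rotation a t) '' diagonalPart e J

lemma isCartanSubalgebra_rotatedDiagonalPart (h : IsBasisSplitting e E F) (hJ : IsOperatorIdeal J)
    (hne : ∃ T ∈ J, T ≠ 0) (a : ℓ^∞(ι, ℂ)) (t : ℝ) :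
    IsCartanSubalgebra J (h.rotatedDiagonalPart a J t) :=
  (isCartanSubalgebra_diagonalPart hJ hne e).image _ (hJ.conjStarAlgAut_mem_iff _)

lemma rotatedDiagonalPart_inter (h : IsBasisSplitting e E F) (hI : IsOperatorIdeal I)
    (hIJ : I ⊆ J) (a : ℓ^∞(ι, ℂ)) (t : ℝ) :
    h.rotatedDiagonalPart a J t ∩ I = h.rotatedDiagonalPart a I t :=
  image_diagonalPart_inter (hI.conjStarAlgAut_mem_iff _) hIJ e

lemma image_rotatedDiagonalPart (h : IsBasisSplitting e E F) (a : ℓ^∞(ι, ℂ)) (s t : ℝ) :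
    (fun T => h.rotation a (t - s) * T * star (h.rotation a (t - s) : H →L[ℂ] H)) ''
      h.rotatedDiagonalPart a J s = h.rotatedDiagonalPart a J t := by
  have hmul : h.rotation a (t - s) * h.rotation a s = h.rotation a t := by
    rw [h.rotation_mul_rotation, sub_add_cancel]
  rw [rotatedDiagonalPart, rotatedDiagonalPart, Set.image_image, ← hmul]
  refine Set.image_congr fun T _ => ?_
  rw [Unitary.conjStarAlgAut_mul_apply, Unitary.conjStarAlgAut_apply (h.rotation a (t - s))]

lemma diagonalOp_mem_of_image_rotatedDiagonalPart_eq (h : IsBasisSplitting e E F)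
    (hI : IsOperatorIdeal I) (hne : ∃ T ∈ I, T ≠ 0) {a : ℓ^∞(ι, ℂ)} {s t : ℝ} (hst : s ≠ t)
    (ha : |2 * (s - t)| * ‖a‖ ≤ Real.pi) {W : H →L[ℂ] H} (hW : W - 1 ∈ I)
    (himage : (fun T => W * T * star W) '' h.rotatedDiagonalPart a I s =
      h.rotatedDiagonalPart a I t) : diagonalOp e a ∈ I := by
  set R := h.rotation a s
  set S := h.rotation a t
  have hV : ∀ T ∈ diagonalPart e I,
      (star S * W * R) * T * star (star S * W * R) ∈ Set.range (diagonalOp e) := fun T hT => by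
    obtain ⟨T', hT', heq⟩ := himage.subset ⟨_, ⟨T, hT, rfl⟩, rfl⟩
    convert hT'.2 using 1
    calc (star S * W * R) * T * star (star S * W * R)
        = star S * (W * (R * T * star R) * star W) * S := by simp [mul_assoc]
      _ = star S * (S * T' * star S) * S := congr(star (S : H →L[ℂ] H) * $(heq.symm) * S)
      _ = T' := (Unitary.conjStarAlgAut ℂ _ S).symm_apply_apply T'
  have hquot : star S * R = h.rotation a (s - t) := by
    rw [Unitary.star_eq_inv, inv_mul_eq_iff_eq_mul, h.rotation_mul_rotation, add_sub_cancel]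
  refine h.diagonalOp_mem_of_rotation_sub_mem hI (sub_ne_zero.mpr hst) ha
    (exists_apply_basis_eq_smul hI hne hV) ?_
  have hdiff : (h.rotation a (s - t) : H →L[ℂ] H) - star S * W * R = star S * (1 - W) * R := by
    rw [← hquot, Submonoid.coe_mul]
    noncomm_ring
  have hW' : 1 - W ∈ I := by simpa only [neg_one_smul, neg_sub] using hI.smul_mem (-1) hW
  exact hdiff ▸ hI.mul_mem_right _ (hI.mul_mem_left _ hW')

end IsBasisSplitting

end Conjugation

universe u

lemma exists_diagonalOp_mem_notMem {H : Type u} [NormedAddCommGroup H] [InnerProductSpace ℂ H]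
    [CompleteSpace H] {I J : Set (H →L[ℂ] H)} (hI : IsOperatorIdeal I) (hJ : IsOperatorIdeal J)
    (hIltJ : ∃ T ∈ J, T ∉ I) (hcompact : ∀ T ∈ J, IsCompactOperator T) :
    ∃ (ι : Type u) (e : HilbertBasis ι ℂ H) (a : ℓ^∞(ι, ℂ)),
      ‖a‖ = 1 ∧ diagonalOp e a ∈ J ∧ diagonalOp e a ∉ I := by
  obtain ⟨T, hTJ, hTI⟩ := hIltJ
  obtain ⟨ι, e, a, V, hT, hD⟩ := exists_polar_decomposition (hcompact T hTJ)
  have hDJ : diagonalOp e a ∈ J := hD ▸ hJ.mul_mem_left _ hTJ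
  have hDI : diagonalOp e a ∉ I := fun h => hTI (hT ▸ hI.mul_mem_left V h)
  have ha : a ≠ 0 := by
    rintro rfl
    exact hDI (map_zero (diagonalOp e) ▸ hI.zero_mem)
  refine ⟨ι, e, (‖a‖⁻¹ : ℂ) • a, norm_smul_inv_norm ha, ?_, fun h => hDI ?_⟩
  · rw [map_smul]
    exact hJ.smul_mem _ hDJ
  · rw [map_smul] at h
    simpa [smul_smul, ha] using hI.smul_mem ‖a‖ h

theorem conjugate_in_large_ideal_not_in_small_ideal_general
    {H : Type*} [NormedAddCommGroup H] [InnerProductSpace ℂ H] [CompleteSpace H]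
    (I J : Set (H →L[ℂ] H))
    (hI : IsOperatorIdeal I) (hJ : IsOperatorIdeal J)
    (hIJ : I ⊆ J)
    (hInz : ∃ T ∈ I, T ≠ (0 : H →L[ℂ] H))
    (hIltJ : ∃ T ∈ J, T ∉ I)
    (hcompact : ∀ T ∈ J, IsCompactOperator T) :
    ∃ C : ℝ → Set (H →L[ℂ] H),
      (∀ α ∈ Ioc (0 : ℝ) 1, IsCartanSubalgebra J (C α)) ∧
      (∀ α ∈ Ioc (0 : ℝ) 1, ∀ β ∈ Ioc (0 : ℝ) 1,
        ∃ W : H →L[ℂ] H, W ∈ unitary (H →L[ℂ] H) ∧ W - 1 ∈ J ∧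
          (fun T : H →L[ℂ] H => W * T * star W) '' C α = C β) ∧
      (∀ α ∈ Ioc (0 : ℝ) 1, IsCartanSubalgebra I (C α ∩ I)) ∧
      (∀ α ∈ Ioc (0 : ℝ) 1, ∀ β ∈ Ioc (0 : ℝ) 1, α ≠ β →
        ¬ ∃ W : H →L[ℂ] H, W - 1 ∈ I ∧
          (fun T : H →L[ℂ] H => W * T * star W) '' (C α ∩ I) = C β ∩ I) := by
  obtain ⟨ι, e, a, ha, haJ, haI⟩ := exists_diagonalOp_mem_notMem hI hJ hIltJ hcompact
  have h1 : (1 : H →L[ℂ] H) ∉ I := fun h => haI (hI.eq_univ_of_one_mem h ▸ Set.mem_univ _)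
  have := hI.infinite_of_one_notMem hInz h1 e
  obtain ⟨E, F, h⟩ := exists_isBasisSplitting e
  refine ⟨h.rotatedDiagonalPart a J, fun α _ => ?_, fun α _ β _ => ?_, fun α _ => ?_,
    fun α hα β hβ hne => ?_⟩
  · exact h.isCartanSubalgebra_rotatedDiagonalPart hJ (hInz.imp fun T hT => ⟨hIJ hT.1, hT.2⟩) a α
  · exact ⟨h.rotation a (β - α), (h.rotation a (β - α)).2, h.rotation_sub_one_mem hJ haJ _,
      h.image_rotatedDiagonalPart a α β⟩
  · rw [h.rotatedDiagonalPart_inter hI hIJ]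
    exact h.isCartanSubalgebra_rotatedDiagonalPart hI hInz a α
  · rintro ⟨W, hW, himage⟩
    rw [h.rotatedDiagonalPart_inter hI hIJ, h.rotatedDiagonalPart_inter hI hIJ] at himage
    have hsmall : |2 * (α - β)| * ‖a‖ ≤ Real.pi := by
      rw [ha, mul_one, abs_mul, abs_two]
      linarith [Real.two_le_pi, abs_sub_le_of_nonneg_of_le hα.1.le hα.2 hβ.1.le hβ.2]
    exact haI (h.diagonalOp_mem_of_image_rotatedDiagonalPart_eq hI hInz hne hsmall hW himage)

/-- Let `I ⊊ J` be operator ideals with `{0} ⊊ I` and `J ⊊ B(H)`.  Then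
there exists an uncountable family `(C_α)_{α ∈ (0,1]}` of Cartan subalgebras of `J` that are
pairwise `U_J(H)`-conjugate, such that each `C_α ∩ I` is a Cartan subalgebra of `I`, and
for `α ≠ β` the subalgebras `C_α ∩ I` and `C_β ∩ I` are not `U_I(H)`-conjugate. -/
theorem conjugate_in_large_ideal_not_in_small_ideal
    {H : Type*} [NormedAddCommGroup H] [InnerProductSpace ℂ H] [CompleteSpace H]
    (b : HilbertBasis ℕ ℂ H)
    (I J : Set (H →L[ℂ] H))
    (hI : IsOperatorIdeal I) (hJ : IsOperatorIdeal J)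
    (hIJ : I ⊆ J)
    (hInz : ∃ T ∈ I, T ≠ (0 : H →L[ℂ] H))
    (hIltJ : ∃ T ∈ J, T ∉ I)
    (hJproper : ∃ T : H →L[ℂ] H, T ∉ J) :
    ∃ C : ℝ → Set (H →L[ℂ] H),
      (∀ α ∈ Ioc (0 : ℝ) 1, IsCartanSubalgebra J (C α)) ∧
      (∀ α ∈ Ioc (0 : ℝ) 1, ∀ β ∈ Ioc (0 : ℝ) 1,
        ∃ W : H →L[ℂ] H, W ∈ unitary (H →L[ℂ] H) ∧ W - 1 ∈ J ∧
          (fun T : H →L[ℂ] H => W * T * star W) '' C α = C β) ∧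
      (∀ α ∈ Ioc (0 : ℝ) 1, IsCartanSubalgebra I (C α ∩ I)) ∧
      (∀ α ∈ Ioc (0 : ℝ) 1, ∀ β ∈ Ioc (0 : ℝ) 1, α ≠ β →
        ¬ ∃ W : H →L[ℂ] H, W ∈ unitary (H →L[ℂ] H) ∧ W - 1 ∈ I ∧
          (fun T : H →L[ℂ] H => W * T * star W) '' (C α ∩ I) = C β ∩ I) := by
  obtain ⟨C, hC, hconj, hCI, hnot⟩ := conjugate_in_large_ideal_not_in_small_ideal_general I J hI hJ
    hIJ hInz hIltJ fun T hT =>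
      hJ.isCompactOperator_of_mem (Set.ne_univ_iff_exists_notMem J |>.mpr hJproper) b hT
  exact ⟨C, hC, hconj, hCI, fun α hα β hβ hne ⟨W, _, hW⟩ => hnot α hα β hβ hne ⟨W, hW⟩⟩
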